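/- Let (Θ, μ) be a σ-finite measure space, f : Θ → (0,∞) and q : Θ → (0,∞) measurable with ∫_Θ q dμ = 1. Fix α with 0 < α < 1. Assume that θ ↦ q(θ) ln(f(θ)/q(θ)) is μ-integrable and that E_α(q) = ∫_Θ f^α q^{1−α} dμ satisfies 0 < E_α(q) < ∞. Then α ∫_Θ ln(f(θ)/q(θ)) q(θ) dμ(θ) ≤ ln E_α(q). In particular, combined with E_α(q) ≤ m^α, the α-energy lower bound on the log marginal is tighter than the Kullback–Leibler evidence lower bound H(f,q) = ∫ ln(f/q) q dμ. -/

import Mathlib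

open MeasureTheory

/-! Jensen's inequality for the concave logarithm and the probability measure `q dμ`, in its
tangent-line form. With `E = E_α(q)` and `t = (f/q)^α`, the tangent to `log` at `E` gives
`α log (f/q) = log t ≤ log E + t/E - 1`. Multiplying by `q` turns `t q` into `f^α q^(1-α)`, and
integrating against `μ` leaves `log E + E/E - 1 = log E`. -/

/-- Proposition 2(i), lower half: for 0 < α < 1, the KLD evidence lower bound
`H(f,q) = ∫ ln(f/q) q` satisfies `α · H(f,q) ≤ ln E_α(q)` where
`E_α(q) = ∫ f^α q^(1-α)`. -/
theorem alpha_energy_tighter_than_KLD_bound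
    {Θ : Type*} [MeasurableSpace Θ] (μ : Measure Θ) [SigmaFinite μ]
    (f q : Θ → ℝ)
    (hf : Measurable f) (hf0 : ∀ θ, 0 < f θ)
    (hq : Measurable q) (hq0 : ∀ θ, 0 < q θ) (hq1 : ∫ θ, q θ ∂μ = 1)
    (α : ℝ) (hα0 : 0 < α) (hα1 : α < 1)
    (hH : Integrable (fun θ => q θ * Real.log (f θ / q θ)) μ)
    (hEint : Integrable (fun θ => f θ ^ α * q θ ^ (1 - α)) μ)
    (hEpos : 0 < ∫ θ, f θ ^ α * q θ ^ (1 - α) ∂μ) :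
    α * ∫ θ, Real.log (f θ / q θ) * q θ ∂μ
      ≤ Real.log (∫ θ, f θ ^ α * q θ ^ (1 - α) ∂μ) := by
  have hqi : Integrable q μ := by
    by_contra h
    -- a non-integrable `q` would have Bochner integral `0`, not `1`
    simp [integral_undef h] at hq1
  set E := ∫ θ, f θ ^ α * q θ ^ (1 - α) ∂μ with hE
  have pointwise : ∀ θ, α * (q θ * Real.log (f θ / q θ)) ≤
      (Real.log E - 1) * q θ + E⁻¹ * (f θ ^ α * q θ ^ (1 - α)) := by
    intro θ
    have hr : 0 < f θ / q θ := div_pos (hf0 θ) (hq0 θ)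
    have ht : 0 < (f θ / q θ) ^ α := Real.rpow_pos_of_pos hr α
    have hlog := Real.log_le_sub_one_of_pos (div_pos ht hEpos)
    rw [Real.log_div ht.ne' hEpos.ne', Real.log_rpow hr] at hlog
    have hmul : f θ ^ α * q θ ^ (1 - α) = q θ * (f θ / q θ) ^ α := by
      rw [Real.div_rpow (hf0 θ).le (hq0 θ).le, Real.rpow_sub (hq0 θ), Real.rpow_one]
      ring
    calc α * (q θ * Real.log (f θ / q θ))
        = q θ * (α * Real.log (f θ / q θ)) := by ring
      _ ≤ q θ * (Real.log E - 1 + (f θ / q θ) ^ α / E) :=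
          mul_le_mul_of_nonneg_left (by linarith) (hq0 θ).le
      _ = _ := by rw [hmul]; ring
  calc α * ∫ θ, Real.log (f θ / q θ) * q θ ∂μ
      = ∫ θ, α * (q θ * Real.log (f θ / q θ)) ∂μ := by
        rw [integral_const_mul]
        simp only [mul_comm]
    _ ≤ ∫ θ, ((Real.log E - 1) * q θ + E⁻¹ * (f θ ^ α * q θ ^ (1 - α))) ∂μ :=
        integral_mono (hH.const_mul α) ((hqi.const_mul _).add (hEint.const_mul _)) pointwise
    _ = Real.log E := by
        rw [integral_add (hqi.const_mul _) (hEint.const_mul _), integral_const_mul,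
          integral_const_mul, hq1, ← hE, inv_mul_cancel₀ hEpos.ne']
        ring
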